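/- Let W be a 2-Lannér Coxeter group of rank n (an irreducible, large Coxeter group such that the standard subgroup generated by any n−2 of the generators is finite). Then the Tits symmetric bilinear form B_W, given by the matrix with entries −2cos(π/M_{st}), is nondegenerate of signature (n−1, 1). -/

import Mathlib

open Matrix

namespace CoxeterMatrix

section

variable {B : Type*} (M : CoxeterMatrix B)

/-- The matrix `-2 cos (π / M s t)` of the Tits form of a Coxeter matrix. -/
noncomputable def cosineMatrix : Matrix B B ℝ :=
  Matrix.of fun s t => -2 * Real.cos (Real.pi / (M s t : ℝ))

lemma cosineMatrix_symm (s t : B) : M.cosineMatrix s t = M.cosineMatrix t s := by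
  simp [cosineMatrix, M.symmetric s t]

lemma cosineMatrix_self (s : B) : M.cosineMatrix s s = 2 := by
  simp [cosineMatrix]

lemma cosineMatrix_nonpos {s t : B} (h : s ≠ t) : M.cosineMatrix s t ≤ 0 := by
  have h1 := M.off_diagonal s t h
  have : 0 ≤ Real.cos (Real.pi / (M s t : ℝ)) := by
    rcases Nat.eq_zero_or_pos (M s t) with h0 | h0
    · simp [h0]
    · have h2 : (2 : ℝ) ≤ M s t := by exact_mod_cast (by omega : 2 ≤ M s t)
      apply Real.cos_nonneg_of_neg_pi_div_two_le_of_le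
      · have : 0 ≤ Real.pi / (M s t : ℝ) := by positivity
        linarith [Real.pi_pos]
      · exact div_le_div_of_nonneg_left Real.pi_pos.le (by norm_num) h2
  simp only [cosineMatrix, Matrix.of_apply]
  linarith

lemma cosineMatrix_isSymm : M.cosineMatrix.IsSymm :=
  Matrix.IsSymm.ext fun s t => M.cosineMatrix_symm t s

lemma dotProduct_cosineMatrix_comm [Fintype B] (x y : B → ℝ) :
    x ⬝ᵥ M.cosineMatrix *ᵥ y = y ⬝ᵥ M.cosineMatrix *ᵥ x := by
  rw [dotProduct_mulVec, ← mulVec_transpose, M.cosineMatrix_isSymm.eq, dotProduct_comm]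

/-- The sum of the coordinates with respect to the simple roots. -/
noncomputable def height [Fintype B] : (B → ℝ) →ₗ[ℝ] ℝ := ∑ i, LinearMap.proj i

lemma height_apply [Fintype B] (z : B → ℝ) : height z = ∑ i, z i := by simp [height]

end

variable {B : Type*} [Fintype B] [DecidableEq B] (M : CoxeterMatrix B)

/-- The reflection `z ↦ z - B(α_s, z) α_s` in the simple root `α_s = Pi.single s 1`. -/
noncomputable def simpleReflection (s : B) : Module.End ℝ (B → ℝ) :=
  LinearMap.id - ((LinearMap.proj s).comp M.cosineMatrix.mulVecLin).smulRight (Pi.single s 1)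

lemma simpleReflection_apply (s : B) (z : B → ℝ) :
    M.simpleReflection s z = z - (M.cosineMatrix *ᵥ z) s • Pi.single s 1 := by
  simp [simpleReflection]

lemma simpleReflection_single (s t : B) :
    M.simpleReflection s (Pi.single t 1) =
      Pi.single t 1 - M.cosineMatrix s t • Pi.single s 1 := by
  simp [simpleReflection_apply]

lemma simpleReflection_single_self (s : B) :
    M.simpleReflection s (Pi.single s 1) = - Pi.single s 1 := by
  rw [simpleReflection_single, cosineMatrix_self, two_smul]
  abel

lemma simpleReflection_mul_self (s : B) :
    M.simpleReflection s * M.simpleReflection s = 1 := by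
  refine LinearMap.ext fun z => ?_
  rw [Module.End.mul_apply, M.simpleReflection_apply s z, map_sub, map_smul,
    simpleReflection_single_self, simpleReflection_apply]
  simp

lemma simpleReflection_mul_pow_single (s t : B) (θ : ℝ)
    (h : M.cosineMatrix s t = -2 * Real.cos θ) (k : ℕ) :
    Real.sin θ • ((M.simpleReflection s * M.simpleReflection t) ^ k) (Pi.single s 1) =
        Real.sin (2 * k * θ + θ) • Pi.single s 1 + Real.sin (2 * k * θ) • Pi.single t 1 ∧
      Real.sin θ • ((M.simpleReflection s * M.simpleReflection t) ^ k) (Pi.single t 1) =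
        - (Real.sin (2 * k * θ) • Pi.single s 1 + Real.sin (2 * k * θ - θ) • Pi.single t 1) := by
  have h' : M.cosineMatrix t s = -2 * Real.cos θ := by rw [cosineMatrix_symm, h]
  induction k with
  | zero => simp
  | succ k ih =>
    have e1 : 2 * ((k + 1 : ℕ) : ℝ) * θ + θ = (2 * k * θ + θ) + 2 * θ := by push_cast; ring
    have e2 : 2 * ((k + 1 : ℕ) : ℝ) * θ = (2 * k * θ) + 2 * θ := by push_cast; ring
    have e3 : 2 * ((k + 1 : ℕ) : ℝ) * θ - θ = (2 * k * θ) + θ := by push_cast; ring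
    rw [e3, e1, e2, pow_succ', Module.End.mul_apply _ (_ ^ k), Module.End.mul_apply _ (_ ^ k),
      ← map_smul, ih.1, ← map_smul, ih.2]
    simp only [map_neg, map_add, map_smul, Module.End.mul_apply, map_sub,
      simpleReflection_single, cosineMatrix_self, h, h']
    have hs := Real.sin_sq_add_cos_sq θ
    constructor
    · ext i
      simp only [Pi.add_apply, Pi.sub_apply, Pi.smul_apply, smul_eq_mul,
        Real.sin_add, Real.sin_two_mul, Real.cos_two_mul, Real.cos_add]
      generalize (Pi.single s 1 : B → ℝ) i = x
      generalize (Pi.single t 1 : B → ℝ) i = y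
      generalize Real.sin (2 * k * θ) = S, Real.cos (2 * k * θ) = T at *
      generalize Real.sin θ = a, Real.cos θ = b at *
      have : a ^ 2 = 1 - b ^ 2 := by linarith
      linear_combination (x * S * (2 * b)) * this
    · ext i
      simp only [Pi.add_apply, Pi.sub_apply, Pi.smul_apply, Pi.neg_apply, smul_eq_mul,
        Real.sin_add, Real.sin_sub, Real.sin_two_mul, Real.cos_two_mul]
      generalize (Pi.single s 1 : B → ℝ) i = x
      generalize (Pi.single t 1 : B → ℝ) i = y
      generalize Real.sin (2 * k * θ) = S, Real.cos (2 * k * θ) = T at *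
      generalize Real.sin θ = a, Real.cos θ = b at *
      ring

lemma isLiftable_simpleReflection : M.IsLiftable M.simpleReflection := by
  intro s t
  by_cases hst : s = t
  · subst hst
    simp [simpleReflection_mul_self]
  by_cases h0 : M s t = 0
  · simp [h0]
  have h1 := M.off_diagonal s t hst
  set m := M s t with hm
  have hm2 : (2 : ℝ) ≤ m := by exact_mod_cast (by omega : 2 ≤ m)
  set θ : ℝ := Real.pi / m with hθ
  have hc : M.cosineMatrix s t = -2 * Real.cos θ := by simp [cosineMatrix, hθ, hm]
  have hc' : M.cosineMatrix t s = -2 * Real.cos θ := by rw [cosineMatrix_symm, hc]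
  have hmθ : m * θ = Real.pi := by rw [hθ]; field_simp
  have hsin : 0 < Real.sin θ := by
    apply Real.sin_pos_of_pos_of_lt_pi
    · rw [hθ]; positivity
    · have : 0 < Real.pi := Real.pi_pos
      nlinarith
  obtain ⟨hs, ht⟩ := M.simpleReflection_mul_pow_single s t θ hc m
  have e : 2 * (m : ℝ) * θ = 2 * Real.pi := by rw [mul_assoc, hmθ]
  rw [e] at hs ht
  have hs' : ((M.simpleReflection s * M.simpleReflection t) ^ m) (Pi.single s 1) =
      Pi.single s 1 := by
    apply smul_right_injective _ hsin.ne'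
    simpa [add_comm (2 * Real.pi)] using hs
  have ht' : ((M.simpleReflection s * M.simpleReflection t) ^ m) (Pi.single t 1) =
      Pi.single t 1 := by
    apply smul_right_injective _ hsin.ne'
    simpa using ht
  refine LinearMap.ext fun z => ?_
  have hfix : ∀ z : B → ℝ, (M.cosineMatrix *ᵥ z) s = 0 → (M.cosineMatrix *ᵥ z) t = 0 →
      ((M.simpleReflection s * M.simpleReflection t) ^ m) z = z := by
    intro z h1 h2
    have : (M.simpleReflection s * M.simpleReflection t) z = z := by
      simp [Module.End.mul_apply, simpleReflection_apply, h1, h2]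
    rw [Module.End.pow_apply]
    exact Function.iterate_fixed this m
  set a := (M.cosineMatrix *ᵥ z) s with ha
  set b := (M.cosineMatrix *ᵥ z) t with hb
  set x := (a + Real.cos θ * b) / (2 * Real.sin θ ^ 2) with hx
  set y := (b + Real.cos θ * a) / (2 * Real.sin θ ^ 2) with hy
  have hsq := Real.sin_sq_add_cos_sq θ
  have key := hfix (z - (x • Pi.single s 1 + y • Pi.single t 1)) (by
      simp only [mulVec_sub, mulVec_add, mulVec_smul, Pi.sub_apply, Pi.add_apply, Pi.smul_apply,
        mulVec_single_one, Matrix.col_apply, cosineMatrix_self, hc, smul_eq_mul, ← ha, hx, hy]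
      field_simp
      linear_combination a * hsq) (by
      simp only [mulVec_sub, mulVec_add, mulVec_smul, Pi.sub_apply, Pi.add_apply, Pi.smul_apply,
        mulVec_single_one, Matrix.col_apply, cosineMatrix_self, hc', smul_eq_mul, ← hb, hx, hy]
      field_simp
      linear_combination b * hsq)
  rw [map_sub, map_add, map_smul, map_smul, hs', ht'] at key
  simpa using key

/-- The geometric (Tits) representation of a Coxeter group. -/
noncomputable def geometricRep : M.Group →* Module.End ℝ (B → ℝ) :=
  M.toCoxeterSystem.lift ⟨M.simpleReflection, M.isLiftable_simpleReflection⟩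

lemma geometricRep_simple (s : B) :
    M.geometricRep (M.toCoxeterSystem.simple s) = M.simpleReflection s :=
  M.toCoxeterSystem.lift_apply_simple M.isLiftable_simpleReflection s

/-- The coefficients occurring in the roots of a dihedral group: the values
`sin (k π / m) / sin (π / m)`, to be read as `k` when `m = 0`. -/
lemma exists_dihedral_coefficients (m : ℕ) (hm : m ≠ 1) :
    ∃ U : ℕ → ℝ, U 0 = 0 ∧ U 1 = 1 ∧
      (∀ k, U (k + 2) = 2 * Real.cos (Real.pi / m) * U (k + 1) - U k) ∧
      ∀ k, (m ≠ 0 → k ≤ m) → 0 ≤ U k := by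
  rcases Nat.eq_zero_or_pos m with rfl | h0
  · refine ⟨fun k => k, by simp, by simp, fun k => ?_, fun k _ => by positivity⟩
    simp
    ring
  have hm2 : (2 : ℝ) ≤ m := by exact_mod_cast (by omega : 2 ≤ m)
  have hmθ : m * (Real.pi / m) = Real.pi := by field_simp
  have hθ : 0 < Real.pi / m := by positivity
  have hsin : 0 < Real.sin (Real.pi / m) := by
    apply Real.sin_pos_of_pos_of_lt_pi hθ
    nlinarith
  refine ⟨fun k => Real.sin (k * (Real.pi / m)) / Real.sin (Real.pi / m), by simp, ?_, fun k => ?_,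
    fun k hk => ?_⟩
  · simp [hsin.ne']
  · have h1 : ((k + 2 : ℕ) : ℝ) * (Real.pi / m) = k * (Real.pi / m) + 2 * (Real.pi / m) := by
      push_cast; ring
    have h2 : ((k + 1 : ℕ) : ℝ) * (Real.pi / m) = k * (Real.pi / m) + Real.pi / m := by
      push_cast; ring
    simp only [h1, h2, Real.sin_add, Real.sin_two_mul, Real.cos_two_mul]
    field_simp
    ring
  · apply div_nonneg _ hsin.le
    have hk' : (k : ℝ) ≤ m := by exact_mod_cast hk h0.ne'
    apply Real.sin_nonneg_of_nonneg_of_le_pi (by positivity)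
    nlinarith

open CoxeterSystem in
lemma geometricRep_alternatingWord_single (s t : B) (U : ℕ → ℝ) (h0 : U 0 = 0) (h1 : U 1 = 1)
    (hU : ∀ k, U (k + 2) = - M.cosineMatrix s t * U (k + 1) - U k) (k : ℕ) :
    M.geometricRep (M.toCoxeterSystem.wordProd (alternatingWord s t k)) (Pi.single s 1) =
      if Even k then U (k + 1) • Pi.single s 1 + U k • Pi.single t 1
      else U k • Pi.single s 1 + U (k + 1) • Pi.single t 1 := by
  induction k with
  | zero => simp [alternatingWord, h0, h1]
  | succ k ih =>
    rw [alternatingWord_succ', wordProd_cons, map_mul, Module.End.mul_apply, ih,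
      geometricRep_simple]
    by_cases hk : Even k
    · have hk' : ¬ Even (k + 1) := by simpa [Nat.even_add_one] using hk
      simp only [hk, hk', if_true, if_false, map_add, map_smul, simpleReflection_single,
        cosineMatrix_self, M.cosineMatrix_symm t s, hU]
      module
    · have hk' : Even (k + 1) := by simpa [Nat.even_add_one] using hk
      simp only [hk, hk', if_true, if_false, map_add, map_smul, simpleReflection_single,
        cosineMatrix_self, hU]
      module

open CoxeterSystem in
/-- If `s` is not a right descent of `w`, then `w` maps the simple root `α_s` to a positive root. -/
theorem geometricRep_single_nonneg (w : M.Group) (s : B)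
    (hs : ¬ M.toCoxeterSystem.IsRightDescent w s) :
    0 ≤ M.geometricRep w (Pi.single s 1) := by
  set cs := M.toCoxeterSystem with hcs
  induction hn : cs.length w using Nat.strong_induction_on generalizing w s with
  | _ n ih =>
    by_cases hw : w = 1
    · subst hw
      simp [Pi.single_nonneg]
    obtain ⟨t, ht⟩ := cs.exists_rightDescent_of_ne_one hw
    have hst : s ≠ t := fun h => hs (h ▸ ht)
    let p : ℕ → Prop := fun k => ∃ v : M.Group,
      w = v * cs.wordProd (alternatingWord s t k) ∧ cs.length w = cs.length v + k
    classical
    have hp1 : p 1 := by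
      refine ⟨w * cs.simple t, by simp [alternatingWord], ?_⟩
      exact (cs.isRightDescent_iff.1 ht).symm
    have hle : 1 ≤ cs.length w := by obtain ⟨v, -, h⟩ := hp1; omega
    set k := Nat.findGreatest p (cs.length w) with hk
    have hk1 : 1 ≤ k := Nat.le_findGreatest hle hp1
    obtain ⟨v, hwv, hlen⟩ : p k := Nat.findGreatest_spec hle hp1
    have hmax : ¬ p (k + 1) := by
      rintro h
      have h' := h
      obtain ⟨v', -, h2⟩ := h'
      have := Nat.le_findGreatest (P := p) (n := cs.length w) (by omega) h
      omega
    have hnext : ¬ cs.IsRightDescent v (if Even k then t else s) := by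
      intro h
      refine hmax ⟨v * cs.simple (if Even k then t else s), ?_, ?_⟩
      · rw [alternatingWord_succ', wordProd_cons, mul_assoc, simple_mul_simple_cancel_left, hwv]
      · have := cs.isRightDescent_iff.1 h
        omega
    have hlast : ¬ cs.IsRightDescent v (if Even k then s else t) := by
      intro h
      obtain ⟨j, hj⟩ : ∃ j, k = j + 1 := ⟨k - 1, by omega⟩
      have h3 := cs.isRightDescent_iff.1 h
      have h4 : w = v * cs.simple (if Even k then s else t) *
          cs.wordProd (alternatingWord s t j) := by
        rw [hwv, hj, alternatingWord_succ', wordProd_cons, ← mul_assoc]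
        congr 3
        by_cases hje : Even j <;> simp [hje, Nat.even_add_one]
      have h5 := cs.length_mul_le (v * cs.simple (if Even k then s else t))
        (cs.wordProd (alternatingWord s t j))
      have h6 := cs.length_wordProd_le (alternatingWord s t j)
      rw [← h4] at h5
      rw [length_alternatingWord] at h6
      omega
    have hvs : 0 ≤ M.geometricRep v (Pi.single s 1) := by
      refine ih _ (by omega) v s ?_ rfl
      by_cases he : Even k
      · simpa [he] using hlast
      · simpa [he] using hnext
    have hvt : 0 ≤ M.geometricRep v (Pi.single t 1) := by
      refine ih _ (by omega) v t ?_ rfl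
      by_cases he : Even k
      · simpa [he] using hnext
      · simpa [he] using hlast
    have hkm : M s t ≠ 0 → k + 1 ≤ M s t := by
      intro hM
      by_contra hcon
      apply cs.not_isReduced_alternatingWord t s (m := k + 1) (by rwa [M.symmetric])
        (by rw [M.symmetric]; omega)
      have h1 := cs.not_isRightDescent_iff.1 hs
      have h2 : w * cs.simple s = v * cs.wordProd (alternatingWord t s (k + 1)) := by
        rw [alternatingWord_succ, wordProd_concat, hwv, mul_assoc]
      have h3 := cs.length_mul_le v (cs.wordProd (alternatingWord t s (k + 1)))
      have h4 := cs.length_wordProd_le (alternatingWord t s (k + 1))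
      rw [← h2] at h3
      rw [CoxeterSystem.IsReduced]
      rw [length_alternatingWord] at h4 ⊢
      omega
    obtain ⟨U, hU0, hU1, hU, hUnn⟩ := exists_dihedral_coefficients (M s t) (M.off_diagonal s t hst)
    have hUk := hUnn k fun h => by have := hkm h; omega
    have hUk1 := hUnn (k + 1) hkm
    rw [hwv, map_mul, Module.End.mul_apply,
      M.geometricRep_alternatingWord_single s t U hU0 hU1 (by simpa [cosineMatrix] using hU)]
    split_ifs
    · rw [map_add, map_smul, map_smul]
      exact add_nonneg (smul_nonneg hUk1 hvs) (smul_nonneg hUk hvt)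
    · rw [map_add, map_smul, map_smul]
      exact add_nonneg (smul_nonneg hUk hvs) (smul_nonneg hUk1 hvt)

lemma exists_geometricRep_single_nonpos {w : M.Group} (hw : w ≠ 1) :
    ∃ s, M.geometricRep w (Pi.single s 1) ≤ 0 := by
  obtain ⟨s, hs⟩ := M.toCoxeterSystem.exists_rightDescent_of_ne_one hw
  refine ⟨s, ?_⟩
  have h := M.geometricRep_single_nonneg _ s
    (M.toCoxeterSystem.isRightDescent_iff_not_isRightDescent_mul.1 hs)
  rw [map_mul, Module.End.mul_apply, geometricRep_simple, simpleReflection_single_self,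
    map_neg] at h
  exact neg_nonneg.1 h

end CoxeterMatrix

lemma Matrix.IsSymm.exists_orthogonal_diagonalization {B : Type*} [Fintype B] [DecidableEq B]
    {C : Matrix B B ℝ} (hC : C.IsSymm) :
    ∃ (P : Matrix B B ℝ) (δ : B → ℝ), Pᵀ * P = 1 ∧ P * Pᵀ = 1 ∧ Pᵀ * C * P = diagonal δ := by
  have hA : C.IsHermitian := by
    rw [Matrix.IsHermitian, conjTranspose_eq_transpose_of_trivial]
    exact hC
  have h1 : (hA.eigenvectorUnitary : Matrix B B ℝ)ᵀ * (hA.eigenvectorUnitary : Matrix B B ℝ) = 1 := by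
    have := Unitary.coe_star_mul_self hA.eigenvectorUnitary
    rwa [Matrix.star_eq_conjTranspose, conjTranspose_eq_transpose_of_trivial] at this
  refine ⟨hA.eigenvectorUnitary, hA.eigenvalues, h1, mul_eq_one_comm.1 h1, ?_⟩
  have h := hA.conjStarAlgAut_star_eigenvectorUnitary
  rw [Unitary.conjStarAlgAut_star_apply, Matrix.star_eq_conjTranspose,
    conjTranspose_eq_transpose_of_trivial] at h
  simpa [Function.comp_def] using h

lemma Matrix.quadratic_mulVec_of_diagonalization {B : Type*} [Fintype B] [DecidableEq B]
    {C P : Matrix B B ℝ} {δ : B → ℝ} (h : Pᵀ * C * P = diagonal δ) (c : B → ℝ) :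
    (P *ᵥ c) ⬝ᵥ C *ᵥ (P *ᵥ c) = ∑ i, δ i * c i ^ 2 := by
  have : (P *ᵥ c) ⬝ᵥ C *ᵥ (P *ᵥ c) = c ⬝ᵥ (Pᵀ * C * P) *ᵥ c := by
    rw [← mulVec_mulVec, ← mulVec_mulVec, dotProduct_mulVec c Pᵀ, vecMul_transpose]
  rw [this, h, dotProduct]
  refine Finset.sum_congr rfl fun i _ => ?_
  rw [mulVec_diagonal]
  ring

/-- A positive semidefinite form controls, up to finitely many test vectors, every functional
vanishing on its isotropic vectors. -/
lemma Matrix.IsSymm.exists_functional_bound {B : Type*} [Fintype B] [DecidableEq B]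
    {C : Matrix B B ℝ} (hC : C.IsSymm) (hpos : ∀ x, 0 ≤ x ⬝ᵥ C *ᵥ x) :
    ∃ (u : B → B → ℝ) (K : ℝ), 0 ≤ K ∧ ∀ φ : (B → ℝ) →ₗ[ℝ] ℝ,
      (∀ v, v ⬝ᵥ C *ᵥ v = 0 → φ v = 0) → ∀ (β : B → ℝ) (ε : ℝ), β ⬝ᵥ C *ᵥ β ≤ 2 →
      (∀ i, |φ (u i)| ≤ ε) → |φ β| ≤ K * ε := by
  obtain ⟨P, δ, hP1, hP2, hδ⟩ := hC.exists_orthogonal_diagonalization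
  have hq := Matrix.quadratic_mulVec_of_diagonalization hδ
  have hcol : ∀ i, P *ᵥ Pi.single i 1 = P.col i := fun i => by simp
  have hδ0 : ∀ i, 0 ≤ δ i := by
    intro i
    have h := hpos (P *ᵥ Pi.single i 1)
    rw [hq] at h
    simpa [Pi.single_apply] using h
  refine ⟨fun i => P.col i, ∑ i, √(2 / δ i), Finset.sum_nonneg fun i _ => Real.sqrt_nonneg _,
    fun φ hφ β ε hβ hε => ?_⟩
  set c := Pᵀ *ᵥ β with hc
  have hβc : β = P *ᵥ c := by rw [hc, mulVec_mulVec, hP2, one_mulVec]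
  have hsum : φ β = ∑ i, c i * φ (P.col i) := by
    conv_lhs => rw [hβc]
    have : P *ᵥ c = ∑ i, c i • P.col i := by
      ext j
      simp [mulVec, dotProduct, mul_comm]
    simp [this]
  rw [hβc, hq] at hβ
  rw [hsum, Finset.sum_mul]
  refine (Finset.abs_sum_le_sum_abs _ _).trans (Finset.sum_le_sum fun i _ => ?_)
  rw [abs_mul]
  rcases (hδ0 i).eq_or_lt with h0 | h0
  · have : φ (P.col i) = 0 := by
      apply hφ
      rw [← hcol, hq]
      simp [Pi.single_apply, ← h0]
    simp [this, ← h0]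
  · have h1 : δ i * c i ^ 2 ≤ 2 :=
      (Finset.single_le_sum (f := fun i => δ i * c i ^ 2)
        (fun j _ => mul_nonneg (hδ0 j) (sq_nonneg _)) (Finset.mem_univ i)).trans hβ
    have h2 : c i ^ 2 ≤ 2 / δ i := by rw [le_div_iff₀ h0]; linarith
    exact mul_le_mul (Real.abs_le_sqrt h2) (hε i) (abs_nonneg _) (Real.sqrt_nonneg _)

namespace CoxeterMatrix

variable {B : Type*} [Fintype B] [DecidableEq B] (M : CoxeterMatrix B)

lemma titsForm_sub_smul_single (z : B → ℝ) (s : B) (a : ℝ) :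
    (z - a • Pi.single s 1) ⬝ᵥ M.cosineMatrix *ᵥ (z - a • Pi.single s 1) =
      z ⬝ᵥ M.cosineMatrix *ᵥ z - 2 * a * (M.cosineMatrix *ᵥ z) s + 2 * a ^ 2 := by
  have h := M.dotProduct_cosineMatrix_comm z (Pi.single s 1)
  rw [single_one_dotProduct] at h
  rw [mulVec_sub, mulVec_smul, sub_dotProduct, dotProduct_sub, dotProduct_sub, dotProduct_smul,
    smul_dotProduct, smul_dotProduct, dotProduct_smul, h, single_one_dotProduct,
    single_one_dotProduct, mulVec_single_one, Matrix.col_apply, cosineMatrix_self]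
  simp only [smul_eq_mul]
  ring

lemma titsForm_simpleReflection (s : B) (z : B → ℝ) :
    M.simpleReflection s z ⬝ᵥ M.cosineMatrix *ᵥ M.simpleReflection s z =
      z ⬝ᵥ M.cosineMatrix *ᵥ z := by
  rw [simpleReflection_apply, titsForm_sub_smul_single]
  ring

lemma titsForm_geometricRep (w : M.Group) (z : B → ℝ) :
    M.geometricRep w z ⬝ᵥ M.cosineMatrix *ᵥ M.geometricRep w z = z ⬝ᵥ M.cosineMatrix *ᵥ z := by
  induction w using M.toCoxeterSystem.simple_induction_left with
  | one => simp
  | mul_simple_left w s ih =>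
    rw [map_mul, Module.End.mul_apply, geometricRep_simple, titsForm_simpleReflection, ih]

lemma abs_height_geometricRep_sub_le (hpos : ∀ x, 0 ≤ x ⬝ᵥ M.cosineMatrix *ᵥ x) (ω : List B)
    (z : B → ℝ) :
    |height (M.geometricRep (M.toCoxeterSystem.wordProd ω) z) - height z| ≤
      ω.length * √(2 * (z ⬝ᵥ M.cosineMatrix *ᵥ z)) := by
  induction ω using List.reverseRecOn generalizing z with
  | nil => simp
  | append_singleton ω s ih =>
    rw [CoxeterSystem.wordProd_append, CoxeterSystem.wordProd_singleton, map_mul,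
      Module.End.mul_apply, geometricRep_simple]
    have h1 := ih (M.simpleReflection s z)
    rw [titsForm_simpleReflection] at h1
    have h2 : |height (M.simpleReflection s z) - height z| ≤
        √(2 * (z ⬝ᵥ M.cosineMatrix *ᵥ z)) := by
      have h3 := hpos (z - ((M.cosineMatrix *ᵥ z) s / 2) • Pi.single s 1)
      rw [titsForm_sub_smul_single] at h3
      apply Real.abs_le_sqrt
      have : height (Pi.single s 1 : B → ℝ) = 1 := by simp [height_apply]
      rw [simpleReflection_apply, map_sub, map_smul, this, smul_eq_mul]
      linarith
    rw [List.length_append, List.length_singleton]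
    push_cast
    rw [add_mul, one_mul]
    exact (abs_sub_le _ _ _).trans (add_le_add h1 h2)

/-- A Coxeter group with positive semidefinite Tits form has polynomial growth. -/
theorem exists_card_le_pow_of_titsForm_nonneg (hpos : ∀ x, 0 ≤ x ⬝ᵥ M.cosineMatrix *ᵥ x) :
    ∃ A : ℕ, ∀ (L : ℕ) (T : Finset M.Group), (∀ g ∈ T, M.toCoxeterSystem.length g ≤ L) →
      T.card ≤ (A * (L + 1)) ^ Fintype.card B := by
  obtain ⟨u, K, hK, hu⟩ := M.cosineMatrix_isSymm.exists_functional_bound hpos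
  have hbound : ∀ (g : M.Group) (z : B → ℝ), |height (M.geometricRep g z) - height z| ≤
      M.toCoxeterSystem.length g * √(2 * (z ⬝ᵥ M.cosineMatrix *ᵥ z)) := by
    intro g z
    obtain ⟨ω, hω, rfl⟩ := M.toCoxeterSystem.exists_isReduced g
    rw [hω.eq]
    exact M.abs_height_geometricRep_sub_le hpos ω z
  set D : ℝ := ∑ i, (|height (u i)| + √(2 * (u i ⬝ᵥ M.cosineMatrix *ᵥ u i))) with hD
  set E : ℕ := ⌈(K + 1) * D⌉₊ with hE
  refine ⟨2 * E + 1, fun L T hT => ?_⟩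
  let F : M.Group → B → ℤ := fun g i => ⌊(K + 1) * height (M.geometricRep g (u i))⌋
  have hmaps : ∀ g ∈ T, F g ∈ Fintype.piFinset fun _ : B =>
      Finset.Icc (-((E * (L + 1) : ℕ) : ℤ)) ((E * (L + 1) : ℕ) : ℤ) := by
    intro g hg
    rw [Fintype.mem_piFinset]
    intro i
    have h1 := hbound g (u i)
    have h2 : (M.toCoxeterSystem.length g : ℝ) ≤ L := by exact_mod_cast hT g hg
    have h3 : |height (u i)| + √(2 * (u i ⬝ᵥ M.cosineMatrix *ᵥ u i)) ≤ D :=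
      Finset.single_le_sum
        (f := fun i => |height (u i)| + √(2 * (u i ⬝ᵥ M.cosineMatrix *ᵥ u i)))
        (fun j _ => by positivity) (Finset.mem_univ i)
    have h4 : |height (M.geometricRep g (u i))| ≤ D * (L + 1) := by
      have h5 := abs_sub_abs_le_abs_sub (height (M.geometricRep g (u i))) (height (u i))
      have h6 := mul_le_mul_of_nonneg_right h2
        (Real.sqrt_nonneg (2 * (u i ⬝ᵥ M.cosineMatrix *ᵥ u i)))
      have h7 := abs_nonneg (height (u i))
      have h8 := Real.sqrt_nonneg (2 * (u i ⬝ᵥ M.cosineMatrix *ᵥ u i))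
      have h9 : (0 : ℝ) ≤ L := by positivity
      have h10 := mul_le_mul_of_nonneg_right h3 (by positivity : (0 : ℝ) ≤ L + 1)
      nlinarith
    have h5 : |(K + 1) * height (M.geometricRep g (u i))| ≤ ((E * (L + 1) : ℕ) : ℝ) := by
      rw [abs_mul, abs_of_nonneg (by linarith : 0 ≤ K + 1)]
      calc (K + 1) * |height (M.geometricRep g (u i))|
          ≤ (K + 1) * (D * (L + 1)) := mul_le_mul_of_nonneg_left h4 (by linarith)
        _ = ((K + 1) * D) * (L + 1) := by ring
        _ ≤ E * (L + 1) := mul_le_mul_of_nonneg_right (Nat.le_ceil _) (by positivity)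
        _ = _ := by push_cast; ring
    rw [Finset.mem_Icc]
    rw [abs_le] at h5
    constructor
    · rw [Int.le_floor]
      push_cast at h5 ⊢
      exact h5.1
    · rw [← @Int.cast_le ℝ]
      refine (Int.floor_le _).trans ?_
      exact_mod_cast h5.2
  have hinj : Set.InjOn F T := by
    intro g _ h _ hgh
    by_contra hne
    have hne' : g * h⁻¹ ≠ 1 := fun hh => hne (mul_inv_eq_one.1 hh)
    obtain ⟨s, hs⟩ := M.exists_geometricRep_single_nonpos hne'
    have hs1 : height (M.geometricRep (g * h⁻¹) (Pi.single s 1)) ≤ 0 := by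
      rw [height_apply]
      exact Finset.sum_nonpos fun i _ => hs i
    set β := M.geometricRep h⁻¹ (Pi.single s 1) with hβ
    have hgβ : height (M.geometricRep g β) ≤ 0 := by
      rwa [hβ, ← Module.End.mul_apply, ← map_mul]
    have hhβ : height (M.geometricRep h β) = 1 := by
      rw [hβ, ← Module.End.mul_apply, ← map_mul]
      simp [height_apply]
    have hqβ : β ⬝ᵥ M.cosineMatrix *ᵥ β ≤ 2 := by
      rw [hβ, titsForm_geometricRep]
      simp [cosineMatrix_self]
    have key := hu (height ∘ₗ M.geometricRep g - height ∘ₗ M.geometricRep h)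
      (fun v hv => by
        have h1 := hbound g v
        have h2 := hbound h v
        simp only [hv, mul_zero, Real.sqrt_zero] at h1 h2
        have h1' := abs_nonpos_iff.1 h1
        have h2' := abs_nonpos_iff.1 h2
        simp only [LinearMap.sub_apply, LinearMap.comp_apply]
        linarith) β (1 / (K + 1)) hqβ (fun i => by
        have h1 := Int.abs_sub_lt_one_of_floor_eq_floor (congrFun hgh i)
        rw [← mul_sub, abs_mul, abs_of_nonneg (by linarith : 0 ≤ K + 1)] at h1
        rw [le_div_iff₀ (by linarith), mul_comm]
        exact h1.le)
    simp only [LinearMap.sub_apply, LinearMap.comp_apply, hhβ] at key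
    have h2 : K * (1 / (K + 1)) < 1 := by
      rw [mul_one_div, div_lt_one (by linarith)]
      linarith
    have h3 := neg_abs_le (height (M.geometricRep g β) - 1)
    linarith
  have hcard := Finset.card_le_card_of_injOn F hmaps hinj
  refine hcard.trans ?_
  rw [Fintype.card_piFinset, Finset.prod_const, Finset.card_univ, Int.card_Icc]
  apply Nat.pow_le_pow_left
  have : (((E * (L + 1) : ℕ) : ℤ) + 1 - (-((E * (L + 1) : ℕ) : ℤ))).toNat
      = 2 * (E * (L + 1)) + 1 := by omega
  rw [this]
  nlinarith

end CoxeterMatrix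

lemma FreeGroup.prod_map_of_injective {α : Type*} [DecidableEq α] :
    Function.Injective fun l : List α => (l.map FreeGroup.of).prod := by
  have hword : ∀ l : List α, ((l.map FreeGroup.of).prod).toWord = l.map fun a => (a, true) := by
    intro l
    have hmk : (l.map FreeGroup.of).prod = FreeGroup.mk (l.map fun a => (a, true)) := by
      induction l with
      | nil => simp [FreeGroup.one_eq_mk]
      | cons a l ih =>
        rw [List.map_cons, List.prod_cons, ih, FreeGroup.of, FreeGroup.mul_mk]
        rfl
    rw [hmk, FreeGroup.toWord_mk]
    apply FreeGroup.IsReduced.reduce_eq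
    rw [FreeGroup.IsReduced, List.isChain_map]
    clear hmk
    induction l with
    | nil => simp
    | cons a l ih => cases l <;> simp_all
  intro l l' h
  have h' := congrArg FreeGroup.toWord h
  simp only [hword] at h'
  exact List.map_injective_iff.2 (fun a b hab => congrArg Prod.fst hab) h'

lemma not_forall_two_pow_le_pow (A c d : ℕ) : ¬ ∀ k : ℕ, 2 ^ k ≤ (A * (c * k + 1)) ^ d := by
  intro h
  have hlim := (tendsto_pow_const_div_const_pow_of_one_lt d (one_lt_two (α := ℝ))).const_mul
    (((A * (c + 1) : ℕ) : ℝ) ^ d)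
  rw [mul_zero] at hlim
  obtain ⟨k, hk, hk1⟩ := ((hlim.eventually (gt_mem_nhds one_pos)).and
    (Filter.eventually_ge_atTop 1)).exists
  rw [← mul_div_assoc, div_lt_one (by positivity), ← mul_pow] at hk
  have h1 : A * (c * k + 1) ≤ A * (c + 1) * k := by
    rw [mul_assoc]
    exact Nat.mul_le_mul_left A (by nlinarith)
  have h2 := (h k).trans (Nat.pow_le_pow_left h1 d)
  have h3 : ((2 : ℝ)) ^ k ≤ (((A * (c + 1) : ℕ) : ℝ) * k) ^ d := by exact_mod_cast h2
  linarith

namespace CoxeterMatrix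

variable {B : Type*} [Fintype B] [DecidableEq B] (M : CoxeterMatrix B)

/-- A subgroup of a Coxeter group with positive semidefinite Tits form does not surject onto a
nonabelian free group. -/
theorem not_surjective_freeGroup_of_titsForm_nonneg
    (hpos : ∀ x, 0 ≤ x ⬝ᵥ M.cosineMatrix *ᵥ x) (H : Subgroup M.Group)
    (φ : H →* FreeGroup (Fin 2)) : ¬ Function.Surjective φ := by
  intro hφ
  obtain ⟨A, hA⟩ := M.exists_card_le_pow_of_titsForm_nonneg hpos
  choose a ha using fun i : Fin 2 => hφ (FreeGroup.of i)
  set c := ∑ i, M.toCoxeterSystem.length (a i : M.Group) with hc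
  have hlen : ∀ l : List (Fin 2),
      M.toCoxeterSystem.length ((l.map a).prod : M.Group) ≤ c * l.length := by
    intro l
    induction l with
    | nil => simp
    | cons i l ih =>
      rw [List.map_cons, List.prod_cons, Subgroup.coe_mul, List.length_cons, mul_add, mul_one,
        add_comm]
      refine (M.toCoxeterSystem.length_mul_le _ _).trans (add_le_add ?_ ih)
      exact Finset.single_le_sum (f := fun i => M.toCoxeterSystem.length (a i : M.Group))
        (fun j _ => Nat.zero_le _) (Finset.mem_univ i)
  have hinj : Function.Injective fun l : List (Fin 2) => ((l.map a).prod : M.Group) := by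
    intro l l' h
    have h' := congrArg φ (Subtype.ext h : (l.map a).prod = (l'.map a).prod)
    rw [map_list_prod, map_list_prod, List.map_map, List.map_map] at h'
    have hcomp : φ ∘ a = FreeGroup.of := funext ha
    rw [hcomp] at h'
    exact FreeGroup.prod_map_of_injective h'
  refine not_forall_two_pow_le_pow A c (Fintype.card B) fun k => ?_
  classical
  let f : (Fin k → Fin 2) → M.Group := fun x => (((List.ofFn x).map a).prod : M.Group)
  have hf : Function.Injective f := hinj.comp List.ofFn_injective
  have := hA (c * k) (Finset.univ.image f)
    (by
      intro g hg
      obtain ⟨x, -, rfl⟩ := Finset.mem_image.1 hg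
      simpa [f] using hlen (List.ofFn x))
  rwa [Finset.card_image_of_injective _ hf, Finset.card_univ, Fintype.card_fun,
    Fintype.card_fin, Fintype.card_fin] at this

/-- If the standard subgroup generated by `T` is finite, the Tits form is positive on nonzero
vectors supported on `T`. -/
theorem titsForm_pos_of_finite (T : Set B)
    (hfin : Finite (Subgroup.closure (M.simple '' T) : Subgroup M.Group))
    {x : B → ℝ} (hx : x ≠ 0) (hsupp : ∀ s, s ∉ T → x s = 0) :
    0 < x ⬝ᵥ M.cosineMatrix *ᵥ x := by
  set G := (Subgroup.closure (M.simple '' T) : Subgroup M.Group) with hG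
  have := Fintype.ofFinite G
  let K : (B → ℝ) →ₗ[ℝ] (B → ℝ) →ₗ[ℝ] ℝ := ∑ g : G,
    (dotProductBilin ℝ ℝ).compl₁₂ (M.geometricRep g) (M.geometricRep g)
  have hK : ∀ y z, K y z = ∑ g : G, M.geometricRep g y ⬝ᵥ M.geometricRep g z := by
    intro y z
    simp [K, LinearMap.sum_apply]
  have hKpos : ∀ y, y ≠ 0 → 0 < K y y := by
    intro y hy
    rw [hK]
    have h1 : ∀ z : B → ℝ, 0 ≤ z ⬝ᵥ z := fun z =>
      Finset.sum_nonneg fun i _ => mul_self_nonneg (z i)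
    refine Finset.sum_pos' (fun g _ => h1 _) ⟨1, Finset.mem_univ _, ?_⟩
    refine lt_of_le_of_ne (h1 _) fun h => hy ?_
    simpa using h.symm
  have hKcomm : ∀ y z, K y z = K z y := by
    intro y z
    rw [hK, hK]
    exact Finset.sum_congr rfl fun g _ => dotProduct_comm _ _
  have hKinv : ∀ s ∈ T, ∀ y z, K (M.simpleReflection s y) (M.simpleReflection s z) = K y z := by
    intro s hs y z
    rw [hK, hK]
    have hsG : M.simple s ∈ G := Subgroup.subset_closure ⟨s, hs, rfl⟩
    refine Fintype.sum_equiv (Equiv.mulRight ⟨M.simple s, hsG⟩) _ _ fun g => ?_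
    have h : M.geometricRep (M.simple s) = M.simpleReflection s := M.geometricRep_simple s
    simp [map_mul, h, Module.End.mul_apply]
  have hKC : ∀ s ∈ T, ∀ t, 2 * K (Pi.single t 1) (Pi.single s 1) =
      M.cosineMatrix s t * K (Pi.single s 1) (Pi.single s 1) := by
    intro s hs t
    have h := hKinv s hs (Pi.single t 1) (Pi.single s 1)
    rw [simpleReflection_single_self, simpleReflection_single] at h
    simp only [map_sub, map_neg, map_smul, LinearMap.sub_apply, LinearMap.smul_apply,
      smul_eq_mul] at h
    linarith
  set d : B → ℝ := fun s => K (Pi.single s 1) (Pi.single s 1) with hd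
  have hdpos : ∀ s, 0 < d s := fun s => hKpos _ (by simp)
  have hKd : ∀ s ∈ T, ∀ t ∈ T, M.cosineMatrix s t =
      2 * (K (Pi.single s 1) (Pi.single t 1) / (√(d s) * √(d t))) := by
    intro s hs t ht
    have h1 := hKC s hs t
    have h2 := hKC t ht s
    rw [hKcomm, M.cosineMatrix_symm t s] at h2
    change _ = _ * d s at h1
    change _ = _ * d t at h2
    have hsp := Real.sqrt_pos.2 (hdpos s)
    have htp := Real.sqrt_pos.2 (hdpos t)
    by_cases h0 : M.cosineMatrix s t = 0
    · rw [h0, zero_mul] at h1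
      rw [h0, hKcomm]
      have : K (Pi.single t 1) (Pi.single s 1) = 0 := by linarith
      rw [this]
      simp
    · have hdd : d s = d t := mul_left_cancel₀ h0 (h1.symm.trans h2)
      rw [hdd, Real.mul_self_sqrt (hdpos t).le, hKcomm, ← mul_div_assoc, h2,
        mul_div_assoc, div_self (hdpos t).ne', mul_one]
  set y : B → ℝ := fun s => x s / √(d s) with hy
  have hy0 : y ≠ 0 := by
    intro h
    apply hx
    ext s
    have h1 := congrFun h s
    have hsp := Real.sqrt_pos.2 (hdpos s)
    simpa [hy, hsp.ne'] using h1
  have hyK : x ⬝ᵥ M.cosineMatrix *ᵥ x = 2 * K y y := by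
    have hyy : K y y = ∑ s, ∑ t, y s * (y t * K (Pi.single s 1) (Pi.single t 1)) := by
      have hsum : y = ∑ s, y s • Pi.single s (1 : ℝ) := pi_eq_sum_univ' y
      conv_lhs => rw [hsum]
      simp only [map_sum, LinearMap.sum_apply, map_smul, LinearMap.smul_apply, smul_eq_mul,
        Finset.mul_sum]
      rw [Finset.sum_comm]
      refine Finset.sum_congr rfl fun s _ => Finset.sum_congr rfl fun t _ => by ring
    rw [hyy, dotProduct, Finset.mul_sum]
    refine Finset.sum_congr rfl fun s _ => ?_
    rw [mulVec, dotProduct, Finset.mul_sum, Finset.mul_sum]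
    refine Finset.sum_congr rfl fun t _ => ?_
    by_cases hs : s ∈ T
    · by_cases ht : t ∈ T
      · rw [hKd s hs t ht]
        simp only [hy]
        have hsp := Real.sqrt_pos.2 (hdpos s)
        have htp := Real.sqrt_pos.2 (hdpos t)
        field_simp
      · simp [hy, hsupp t ht]
    · simp [hy, hsupp s hs]
  rw [hyK]
  exact mul_pos two_pos (hKpos y hy0)

end CoxeterMatrix

/-- For a matrix with nonpositive off-diagonal entries, the form is nonpositive on the positive
part of an eigenvector with nonpositive eigenvalue. -/
lemma Matrix.quadratic_max_zero_nonpos {B : Type*} [Fintype B] {C : Matrix B B ℝ}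
    (hoff : ∀ s t, s ≠ t → C s t ≤ 0) {a : B → ℝ} {μ : ℝ} (hμ : μ ≤ 0) (ha : C *ᵥ a = μ • a) :
    (fun k => max (a k) 0) ⬝ᵥ C *ᵥ (fun k => max (a k) 0) ≤ 0 := by
  set p : B → ℝ := fun k => max (a k) 0 with hp
  set m : B → ℝ := fun k => max (-a k) 0 with hm
  have hpm : p = a + m := by
    ext k
    simp only [hp, hm, Pi.add_apply]
    rcases le_total (a k) 0 with h | h
    · rw [max_eq_right h, max_eq_left (by linarith)]; ring
    · rw [max_eq_left h, max_eq_right (by linarith)]; ring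
  have h1 : p ⬝ᵥ C *ᵥ a ≤ 0 := by
    rw [ha, dotProduct_smul, smul_eq_mul]
    refine mul_nonpos_of_nonpos_of_nonneg hμ (Finset.sum_nonneg fun k _ => ?_)
    rcases le_total (a k) 0 with h | h
    · simp [hp, max_eq_right h]
    · simp only [hp, max_eq_left h]
      exact mul_self_nonneg _
  have h2 : p ⬝ᵥ C *ᵥ m ≤ 0 := by
    refine Finset.sum_nonpos fun s _ => ?_
    rw [mulVec, dotProduct, Finset.mul_sum]
    refine Finset.sum_nonpos fun t _ => ?_
    have hps : 0 ≤ p s := le_max_right _ _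
    have hmt : 0 ≤ m t := le_max_right _ _
    by_cases hst : s = t
    · subst hst
      rcases le_total (a s) 0 with h | h
      · simp [hp, max_eq_right h]
      · simp [hm, max_eq_right (neg_nonpos.2 h)]
    · exact mul_nonpos_of_nonneg_of_nonpos hps
        (mul_nonpos_of_nonpos_of_nonneg (hoff s t hst) hmt)
  conv_lhs => rw [hpm, mulVec_add, dotProduct_add, ← hpm]
  linarith

/-- If the form is positive on nonzero vectors supported on the complement of any two indices,
then eigenvectors with nonpositive eigenvalues are never orthogonal, so at most one eigenvalue is
nonpositive. -/
lemma Matrix.dotProduct_ne_zero_of_nonpos_eigenvalues {n : ℕ} (hn : 3 ≤ n) {C : Matrix (Fin n) (Fin n) ℝ}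
    (hoff : ∀ s t, s ≠ t → C s t ≤ 0)
    (hpos : ∀ s t : Fin n, s ≠ t → ∀ x : Fin n → ℝ, x ≠ 0 → x s = 0 → x t = 0 →
      0 < x ⬝ᵥ C *ᵥ x)
    {a b : Fin n → ℝ} {μ ν : ℝ} (ha0 : a ≠ 0) (hb0 : b ≠ 0) (ha : C *ᵥ a = μ • a)
    (hb : C *ᵥ b = ν • b) (hμ : μ ≤ 0) (hν : ν ≤ 0) : a ⬝ᵥ b ≠ 0 := by
  have hdisj : ∀ x y : Fin n → ℝ, x ≠ 0 → y ≠ 0 → (∀ k, x k * y k = 0) →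
      x ⬝ᵥ C *ᵥ x ≤ 0 → y ⬝ᵥ C *ᵥ y ≤ 0 → False := by
    intro x y hx hy hxy hqx hqy
    have huniq : ∀ z : Fin n → ℝ, z ≠ 0 → z ⬝ᵥ C *ᵥ z ≤ 0 → ∀ s t, z s = 0 → z t = 0 → s = t := by
      intro z hz hq s t hs ht
      by_contra hst
      exact absurd (hpos s t hst z hz hs ht) (not_lt.2 hq)
    obtain ⟨i, hi⟩ := Function.ne_iff.1 hx
    obtain ⟨j, hj⟩ := Function.ne_iff.1 hy
    have hyi : y i = 0 := (mul_eq_zero.1 (hxy i)).resolve_left hi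
    have hxj : x j = 0 := (mul_eq_zero.1 (hxy j)).resolve_right hj
    obtain ⟨k, hki, hkj⟩ : ∃ k, k ≠ i ∧ k ≠ j := by
      have : ({i, j} : Finset (Fin n)).card < Fintype.card (Fin n) := by
        rw [Fintype.card_fin]
        exact Finset.card_le_two.trans_lt hn
      obtain ⟨k, hk⟩ := Finset.exists_mem_notMem_of_card_lt_card
        (s := ({i, j} : Finset (Fin n))) (t := Finset.univ) this
      exact ⟨k, by simpa using hk⟩
    rcases mul_eq_zero.1 (hxy k) with h | h
    · exact hkj (huniq x hx hqx k j h hxj)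
    · exact hki (huniq y hy hqy k i h hyi)
  have hsign : ∀ (z : Fin n → ℝ) (η : ℝ), C *ᵥ z = η • z → η ≤ 0 → 0 ≤ z ∨ 0 ≤ -z := by
    intro z η hz hη
    by_contra! hcon
    have h1 := Matrix.quadratic_max_zero_nonpos hoff hη hz
    have h2 := Matrix.quadratic_max_zero_nonpos hoff (a := -z) hη
      (by rw [mulVec_neg, hz, smul_neg])
    refine hdisj _ _ ?_ ?_ ?_ h1 h2
    · intro h
      exact hcon.2 fun k => neg_nonneg.2 (by simpa using congrFun h k)
    · intro h
      exact hcon.1 fun k => by simpa using congrFun h k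
    · intro k
      rcases le_total (z k) 0 with h | h
      · simp [max_eq_right h]
      · simp [max_eq_right (neg_nonpos.2 h)]
  intro hab
  have hqa : a ⬝ᵥ C *ᵥ a ≤ 0 := by
    rw [ha, dotProduct_smul, smul_eq_mul]
    exact mul_nonpos_of_nonpos_of_nonneg hμ (Finset.sum_nonneg fun k _ => mul_self_nonneg _)
  have hqb : b ⬝ᵥ C *ᵥ b ≤ 0 := by
    rw [hb, dotProduct_smul, smul_eq_mul]
    exact mul_nonpos_of_nonpos_of_nonneg hν (Finset.sum_nonneg fun k _ => mul_self_nonneg _)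
  have horth : ∀ x y : Fin n → ℝ, 0 ≤ x → 0 ≤ y → x ⬝ᵥ y = 0 → ∀ k, x k * y k = 0 :=
    fun x y hx hy h k =>
      (Finset.sum_eq_zero_iff_of_nonneg fun k _ => mul_nonneg (hx k) (hy k)).1 h k
        (Finset.mem_univ k)
  refine hdisj a b ha0 hb0 (fun k => ?_) hqa hqb
  rcases hsign a μ ha hμ with h1 | h1 <;> rcases hsign b ν hb hν with h2 | h2
  · exact horth a b h1 h2 hab k
  · simpa using horth a (-b) h1 h2 (by simpa using hab) k
  · simpa using horth (-a) b h1 h2 (by simpa using hab) k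
  · simpa using horth (-a) (-b) h1 h2 (by simpa using hab) k

lemma CoxeterMatrix.titsForm_nonneg_of_le_two {n : ℕ} (hn : n ≤ 2) (M : CoxeterMatrix (Fin n))
    (x : Fin n → ℝ) : 0 ≤ x ⬝ᵥ M.cosineMatrix *ᵥ x := by
  interval_cases n
  · simp
  · simp only [dotProduct, mulVec, Fin.sum_univ_one, cosineMatrix_self]
    nlinarith [sq_nonneg (x 0)]
  · simp only [dotProduct, mulVec, Fin.sum_univ_two, cosineMatrix_self, M.cosineMatrix_symm 1 0]
    have h1 : M.cosineMatrix 0 1 ≤ 2 := by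
      have := Real.neg_one_le_cos (Real.pi / (M 0 1 : ℝ))
      simp only [cosineMatrix, Matrix.of_apply]
      linarith
    have h2 : -2 ≤ M.cosineMatrix 0 1 := by
      have := Real.cos_le_one (Real.pi / (M 0 1 : ℝ))
      simp only [cosineMatrix, Matrix.of_apply]
      linarith
    nlinarith [mul_nonneg (by linarith : 0 ≤ 2 - M.cosineMatrix 0 1) (sq_nonneg (x 0 - x 1)),
      mul_nonneg (by linarith : 0 ≤ 2 + M.cosineMatrix 0 1) (sq_nonneg (x 0 + x 1))]

/-- **Maxwell's theorem.** Let `M` be the Coxeter matrix (entry `0` standing for `∞`) of a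
2-Lannér Coxeter group of rank `n`: the group is irreducible (connected Coxeter diagram),
large (some finite-index subgroup surjects onto a nonabelian free group), and the standard
subgroup generated by any `n − 2` of the simple reflections is finite.  Then the Tits
symmetric bilinear form, given by the cosine matrix `C s t = −2 cos(π / M s t)`, is
nondegenerate of signature `(n − 1, 1)`. -/
theorem maxwell_two_lanner_signature (n : ℕ) (M : CoxeterMatrix (Fin n))
    (hirr : ∀ s t : Fin n, Relation.ReflTransGen (fun a b => a ≠ b ∧ M.M a b ≠ 2) s t)
    (hlarge : ∃ H : Subgroup M.Group, H.FiniteIndex ∧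
        ∃ φ : H →* FreeGroup (Fin 2), Function.Surjective φ)
    (h2lanner : ∀ s t : Fin n, s ≠ t →
        Finite (Subgroup.closure (M.simple '' {u : Fin n | u ≠ s ∧ u ≠ t}) : Subgroup M.Group))
    (C : Matrix (Fin n) (Fin n) ℝ)
    (hC : ∀ s t, C s t = -2 * Real.cos (Real.pi / (M.M s t : ℝ))) :
    C.det ≠ 0 ∧
    ∃ (P : Matrix (Fin n) (Fin n) ℝ) (δ : Fin n → ℝ),
      IsUnit P.det ∧ Matrix.transpose P * C * P = Matrix.diagonal δ ∧
      {i | 0 < δ i}.ncard = n - 1 ∧ {i | δ i < 0}.ncard = 1 := by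
  obtain rfl : C = M.cosineMatrix := Matrix.ext hC
  obtain ⟨H, -, φ, hφ⟩ := hlarge
  have hindef : ¬ ∀ x, 0 ≤ x ⬝ᵥ M.cosineMatrix *ᵥ x := fun hpos =>
    M.not_surjective_freeGroup_of_titsForm_nonneg hpos H φ hφ
  have hn : 3 ≤ n := by
    by_contra hcon
    exact hindef (M.titsForm_nonneg_of_le_two (by omega))
  obtain ⟨P, δ, hP1, hP2, hδ⟩ := M.cosineMatrix_isSymm.exists_orthogonal_diagonalization
  have heig : ∀ i, M.cosineMatrix *ᵥ P.col i = δ i • P.col i := by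
    intro i
    have h : M.cosineMatrix * P = P * diagonal δ := by
      rw [← hδ, Matrix.mul_assoc, ← Matrix.mul_assoc, hP2, Matrix.one_mul]
    ext j
    have := congrFun (congrFun h j) i
    rw [mul_diagonal] at this
    simpa [Matrix.mul_apply, mulVec, dotProduct, mul_comm] using this
  have hdot : ∀ i j, P.col i ⬝ᵥ P.col j = (1 : Matrix (Fin n) (Fin n) ℝ) i j := by
    intro i j
    rw [← hP1]
    simp [Matrix.mul_apply, dotProduct]
  have hcol : ∀ i, P.col i ≠ 0 := by
    intro i h
    have := hdot i i
    simp [h] at this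
  have huniq : ∀ i j, δ i ≤ 0 → δ j ≤ 0 → i = j := by
    intro i j hi hj
    by_contra hij
    refine Matrix.dotProduct_ne_zero_of_nonpos_eigenvalues hn (fun s t => M.cosineMatrix_nonpos)
      (fun s t hst x hx hs ht => M.titsForm_pos_of_finite _ (h2lanner s t hst) hx fun u hu => ?_)
      (hcol i) (hcol j) (heig i) (heig j) hi hj ?_
    · by_contra hxu
      exact hu ⟨fun h => hxu (h ▸ hs), fun h => hxu (h ▸ ht)⟩
    · rw [hdot, Matrix.one_apply_ne hij]
  obtain ⟨i₀, hi₀⟩ : ∃ i, δ i < 0 := by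
    by_contra! hcon
    refine hindef fun x => ?_
    have hx : x = P *ᵥ (Pᵀ *ᵥ x) := by rw [mulVec_mulVec, hP2, one_mulVec]
    rw [hx, Matrix.quadratic_mulVec_of_diagonalization hδ]
    exact Finset.sum_nonneg fun i _ => mul_nonneg (hcon i) (sq_nonneg _)
  have hpos_iff : ∀ i, 0 < δ i ↔ i ≠ i₀ := by
    intro i
    refine ⟨fun h hi => ?_, fun h => ?_⟩
    · subst hi
      linarith
    · by_contra hcon
      exact h (huniq i i₀ (not_lt.1 hcon) hi₀.le)
  have hneg : {i | δ i < 0} = {i₀} := by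
    ext i
    refine ⟨fun h => huniq i i₀ (le_of_lt h) hi₀.le, fun h => ?_⟩
    rw [Set.mem_singleton_iff.1 h]
    exact hi₀
  have hpos : {i | 0 < δ i} = {i₀}ᶜ := by
    ext i
    simpa using hpos_iff i
  have hdetP : P.det * P.det = 1 := by
    have := congrArg Matrix.det hP1
    rwa [det_mul, det_transpose, det_one] at this
  refine ⟨fun hdet => ?_, P, δ, IsUnit.of_mul_eq_one _ hdetP, hδ, ?_, ?_⟩
  · have h := congrArg Matrix.det hδ
    rw [det_mul, det_mul, hdet, mul_zero, zero_mul, det_diagonal] at h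
    obtain ⟨i, -, hi⟩ := Finset.prod_eq_zero_iff.1 h.symm
    have := huniq i i₀ hi.le hi₀.le
    subst this
    linarith
  · rw [hpos, Set.ncard_compl, Set.ncard_singleton, Nat.card_eq_fintype_card, Fintype.card_fin]
  · rw [hneg, Set.ncard_singleton]
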